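/- Let G be a non-complete finite connected simple graph on n ≥ 4 vertices whose distance eigenvalues satisfy ∂_3(G) ≤ −1 and ∂_n(G) ≥ −3. Then there exist two proper nonempty graphs G_1 and G_2, at most one of which contains an induced subgraph isomorphic to P_3, such that G ≅ G_1 ∨ G_2. Furthermore, if G_1 contains an induced P_3, then G_1 is connected and G_2 is a complete graph. -/

import Mathlib

/-- The distance matrix of a finite simple graph, over `ℝ`. -/
noncomputable def distMatrix {V : Type*} [Fintype V] (G : SimpleGraph V) : Matrix V V ℝ :=
  Matrix.of fun u v => (G.dist u v : ℝ)

/-- The multiset of distance eigenvalues of `G` (the roots, with multiplicity, of the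
characteristic polynomial of the distance matrix). -/
noncomputable def distEigs {V : Type*} [Fintype V] [DecidableEq V] (G : SimpleGraph V) :
    Multiset ℝ :=
  (distMatrix G).charpoly.roots

/-- The distance eigenvalues of `G` listed in non-increasing order,
`∂_1 ≥ ∂_2 ≥ ... ≥ ∂_n`; the `i`-th eigenvalue `∂_i` is `(sortedDistEigs G).getD (i-1) 0`. -/
noncomputable def sortedDistEigs {V : Type*} [Fintype V] [DecidableEq V] (G : SimpleGraph V) :
    List ℝ :=
  ((distEigs G).sort (· ≤ ·)).reverse

/-- `G` contains an induced subgraph isomorphic to `H`. -/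
def hasInducedIso {V W : Type*} (G : SimpleGraph V) (H : SimpleGraph W) : Prop :=
  ∃ s : Set V, Nonempty (G.induce s ≃g H)

open Matrix in
/-- A real symmetric quadratic form expanded in an orthonormal eigenbasis. -/
theorem Matrix.IsHermitian.dotProduct_mulVec_eq_sum {n : Type*} [Fintype n] [DecidableEq n]
    {A : Matrix n n ℝ} (hA : A.IsHermitian) (x : n → ℝ) :
    x ⬝ᵥ A *ᵥ x = ∑ i, hA.eigenvalues i * ((hA.eigenvectorBasis i).ofLp ⬝ᵥ x) ^ 2 := by
  have h := hA.eigenvectorBasis.sum_inner_mul_inner (WithLp.toLp 2 x) (WithLp.toLp 2 (A *ᵥ x))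
  simp only [EuclideanSpace.inner_eq_star_dotProduct, star_trivial] at h
  rw [dotProduct_comm, ← h]
  refine Finset.sum_congr rfl fun i _ => ?_
  have hsymm : A *ᵥ x ⬝ᵥ (hA.eigenvectorBasis i).ofLp
      = hA.eigenvalues i * ((hA.eigenvectorBasis i).ofLp ⬝ᵥ x) := by
    rw [dotProduct_comm, dotProduct_mulVec, ← mulVec_transpose,
      ← conjTranspose_eq_transpose_of_trivial, hA.eq, hA.mulVec_eigenvectorBasis, smul_dotProduct,
      smul_eq_mul]
  rw [hsymm]
  ring

open Matrix in
/-- Parseval's identity in the eigenbasis of a real symmetric matrix. -/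
theorem Matrix.IsHermitian.dotProduct_self_eq_sum {n : Type*} [Fintype n] [DecidableEq n]
    {A : Matrix n n ℝ} (hA : A.IsHermitian) (x : n → ℝ) :
    x ⬝ᵥ x = ∑ i, ((hA.eigenvectorBasis i).ofLp ⬝ᵥ x) ^ 2 := by
  have h := hA.eigenvectorBasis.sum_inner_mul_inner (WithLp.toLp 2 x) (WithLp.toLp 2 x)
  simp only [EuclideanSpace.inner_eq_star_dotProduct, star_trivial] at h
  rw [← h]
  refine Finset.sum_congr rfl fun i _ => ?_
  rw [dotProduct_comm x, sq]

theorem distMatrix_isHermitian {V : Type*} [Fintype V] (G : SimpleGraph V) :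
    (distMatrix G).IsHermitian := by
  ext u v
  simp [distMatrix, SimpleGraph.dist_comm]

theorem sortedDistEigs_eq_ofFn {V : Type*} [Fintype V] [DecidableEq V] (G : SimpleGraph V) :
    sortedDistEigs G = List.ofFn (distMatrix_isHermitian G).eigenvalues₀ := by
  refine List.Perm.eq_of_pairwise (le := (· ≥ ·)) (fun a b _ _ h₁ h₂ => le_antisymm h₂ h₁) ?_ ?_ ?_
  · rw [sortedDistEigs, List.pairwise_reverse]
    exact Multiset.pairwise_sort _ _
  · exact List.sortedGE_iff_pairwise.mp
      ((distMatrix_isHermitian G).eigenvalues₀_antitone.sortedGE_ofFn)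
  · refine (List.reverse_perm _).trans (Multiset.coe_eq_coe.mp ?_)
    rw [Multiset.sort_eq, distEigs, (distMatrix_isHermitian G).roots_charpoly_eq_eigenvalues₀,
      Fin.univ_val_map]
    rfl

open Matrix in
theorem neg_three_mul_le_of_smallest {V : Type*} [Fintype V] [DecidableEq V] [Nonempty V]
    (G : SimpleGraph V)
    (hsmall : -3 ≤ (sortedDistEigs G).getD (Fintype.card V - 1) 0) (x : V → ℝ) :
    -3 * (x ⬝ᵥ x) ≤ x ⬝ᵥ distMatrix G *ᵥ x := by
  have hA := distMatrix_isHermitian G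
  have hpos : 0 < Fintype.card V := Fintype.card_pos
  rw [sortedDistEigs_eq_ofFn, List.getD_eq_getElem _ _ (by simpa using hpos),
    List.getElem_ofFn] at hsmall
  rw [hA.dotProduct_mulVec_eq_sum, hA.dotProduct_self_eq_sum, Finset.mul_sum]
  refine Finset.sum_le_sum fun i _ => mul_le_mul_of_nonneg_right ?_ (sq_nonneg _)
  refine hsmall.trans (hA.eigenvalues₀_antitone ?_)
  rw [Fin.le_def]
  exact Nat.le_sub_one_of_lt (Fin.is_lt _)

open Matrix in
/-- If the third distance eigenvalue is at most `-1`, then every three vectors have a nontrivial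
combination on which the quadratic form of `D + I` is nonpositive. -/
theorem exists_combination_of_third {V : Type*} [Fintype V] [DecidableEq V]
    (G : SimpleGraph V) (hn : 3 ≤ Fintype.card V) (h3 : (sortedDistEigs G).getD 2 0 ≤ -1)
    (w : Fin 3 → V → ℝ) :
    ∃ c : Fin 3 → ℝ, c ≠ 0 ∧
      (∑ k, c k • w k) ⬝ᵥ distMatrix G *ᵥ (∑ k, c k • w k)
        + (∑ k, c k • w k) ⬝ᵥ (∑ k, c k • w k) ≤ 0 := by
  have hA := distMatrix_isHermitian G
  rw [sortedDistEigs_eq_ofFn, List.getD_eq_getElem _ _ (by simpa using Nat.lt_of_succ_le hn),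
    List.getElem_ofFn] at h3
  let e : Fin (Fintype.card V) ≃ V := Fintype.equivOfCardEq (Fintype.card_fin _)
  let F : (Fin 3 → ℝ) →ₗ[ℝ] (Fin 2 → ℝ) := Matrix.mulVecLin (Matrix.of fun j k =>
    (hA.eigenvectorBasis (e (Fin.castLE (by lia) j))).ofLp ⬝ᵥ w k)
  obtain ⟨c, hcF, hc⟩ := (Submodule.ne_bot_iff _).mp
    (F.ker_ne_bot_of_finrank_lt (by simp))
  refine ⟨c, hc, ?_⟩
  rw [hA.dotProduct_mulVec_eq_sum, hA.dotProduct_self_eq_sum, ← Finset.sum_add_distrib]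
  refine Finset.sum_nonpos fun i _ => ?_
  by_cases hi : (e.symm i).val < 2
  · have h0 : (hA.eigenvectorBasis i).ofLp ⬝ᵥ (∑ k, c k • w k) = 0 := by
      have h := congrFun (LinearMap.mem_ker.mp hcF) ⟨_, hi⟩
      have hcast : e (Fin.castLE (by lia) (⟨_, hi⟩ : Fin 2)) = i := by simp
      simp only [F, mulVecLin_apply, mulVec, of_apply, hcast, Pi.zero_apply] at h
      rw [dotProduct_sum, ← h]
      refine Finset.sum_congr rfl fun k _ => ?_
      rw [dotProduct_smul, smul_eq_mul, mul_comm]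
    simp [h0]
  · have hle : hA.eigenvalues i ≤ -1 := by
      refine (hA.eigenvalues₀_antitone ?_).trans h3
      rw [Fin.le_def]
      exact not_lt.mp hi
    nlinarith [sq_nonneg ((hA.eigenvectorBasis i).ofLp ⬝ᵥ (∑ k, c k • w k))]

/-- The vector with value `y i` at the vertex `f i`, and zero elsewhere. -/
def spread {V : Type*} [DecidableEq V] {m : ℕ} (f : Fin m → V) (y : Fin m → ℝ) : V → ℝ :=
  fun v => ∑ i, if f i = v then y i else 0

open Matrix in
theorem spread_dotProduct {V : Type*} [Fintype V] [DecidableEq V] {m : ℕ} (f : Fin m → V)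
    (y : Fin m → ℝ) (g : V → ℝ) : spread f y ⬝ᵥ g = ∑ i, y i * g (f i) := by
  simp only [spread, dotProduct, Finset.sum_mul]
  rw [Finset.sum_comm]
  simp

open Matrix in
theorem spread_dotProduct_spread {V : Type*} [Fintype V] [DecidableEq V] {m : ℕ} {f : Fin m → V}
    (hf : f.Injective) (y : Fin m → ℝ) : spread f y ⬝ᵥ spread f y = ∑ i, y i ^ 2 := by
  rw [spread_dotProduct]
  refine Finset.sum_congr rfl fun i _ => ?_
  simp [spread, hf.eq_iff, sq]

open Matrix in
theorem spread_dotProduct_mulVec {V : Type*} [Fintype V] [DecidableEq V] {m : ℕ} (f : Fin m → V)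
    (y : Fin m → ℝ) (A : Matrix V V ℝ) :
    spread f y ⬝ᵥ A *ᵥ spread f y = ∑ i, ∑ j, y i * y j * A (f i) (f j) := by
  rw [spread_dotProduct]
  refine Finset.sum_congr rfl fun i _ => ?_
  rw [mulVec, dotProduct_comm, spread_dotProduct, Finset.mul_sum]
  refine Finset.sum_congr rfl fun j _ => ?_
  ring

theorem sum_smul_spread {V : Type*} [DecidableEq V] {m k : ℕ} (f : Fin m → V)
    (c : Fin k → ℝ) (w : Fin k → Fin m → ℝ) :
    ∑ l, c l • spread f (w l) = spread f (∑ l, c l • w l) := by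
  ext v
  simp only [spread, Finset.sum_apply, Pi.smul_apply, smul_eq_mul, Finset.mul_sum]
  rw [Finset.sum_comm]
  refine Finset.sum_congr rfl fun i _ => ?_
  split_ifs <;> simp

/-- If the third distance eigenvalue is at most `-1`, then no three-dimensional space of vectors
supported on five vertices has a positive definite quadratic form of `D + I`. The numbers `mᵢⱼ` are
the distances decreased by one. -/
theorem exists_nonpos_form_of_five {V : Type*} [Fintype V] [DecidableEq V] {G : SimpleGraph V}
    (hn : 3 ≤ Fintype.card V) (h3 : (sortedDistEigs G).getD 2 0 ≤ -1) {v₀ v₁ v₂ v₃ v₄ : V}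
    {m₀₁ m₀₂ m₀₃ m₀₄ m₁₂ m₁₃ m₁₄ m₂₃ m₂₄ m₃₄ : ℕ}
    (h₀₁ : G.dist v₀ v₁ = m₀₁ + 1) (h₀₂ : G.dist v₀ v₂ = m₀₂ + 1)
    (h₀₃ : G.dist v₀ v₃ = m₀₃ + 1) (h₀₄ : G.dist v₀ v₄ = m₀₄ + 1)
    (h₁₂ : G.dist v₁ v₂ = m₁₂ + 1) (h₁₃ : G.dist v₁ v₃ = m₁₃ + 1)
    (h₁₄ : G.dist v₁ v₄ = m₁₄ + 1) (h₂₃ : G.dist v₂ v₃ = m₂₃ + 1)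
    (h₂₄ : G.dist v₂ v₄ = m₂₄ + 1) (h₃₄ : G.dist v₃ v₄ = m₃₄ + 1)
    (w : Fin 3 → Fin 5 → ℝ) :
    ∃ p q r : ℝ, (p ≠ 0 ∨ q ≠ 0 ∨ r ≠ 0) ∧ ∃ y : Fin 5 → ℝ,
      (∀ i, y i = p * w 0 i + q * w 1 i + r * w 2 i) ∧
      (y 0 + y 1 + y 2 + y 3 + y 4) ^ 2
        + 2 * (m₀₁ * (y 0 * y 1) + m₀₂ * (y 0 * y 2) + m₀₃ * (y 0 * y 3) + m₀₄ * (y 0 * y 4)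
          + m₁₂ * (y 1 * y 2) + m₁₃ * (y 1 * y 3) + m₁₄ * (y 1 * y 4)
          + m₂₃ * (y 2 * y 3) + m₂₄ * (y 2 * y 4) + m₃₄ * (y 3 * y 4)) ≤ 0 := by
  have hne : ∀ {u v : V} {m : ℕ}, G.dist u v = m + 1 → u ≠ v := by
    rintro u v m h rfl
    simp at h
  have hf : (![v₀, v₁, v₂, v₃, v₄] : Fin 5 → V).Injective := by
    rw [← List.nodup_ofFn]
    simp [hne h₀₁, hne h₀₂, hne h₀₃, hne h₀₄, hne h₁₂, hne h₁₃, hne h₁₄, hne h₂₃, hne h₂₄,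
      hne h₃₄]
  obtain ⟨c, hc, hle⟩ :=
    exists_combination_of_third G hn h3 (fun k => spread ![v₀, v₁, v₂, v₃, v₄] (w k))
  rw [sum_smul_spread, spread_dotProduct_spread hf, spread_dotProduct_mulVec] at hle
  refine ⟨c 0, c 1, c 2, ?_, ∑ k, c k • w k, fun i => by simp [Fin.sum_univ_three], ?_⟩
  · by_contra! h
    refine hc (funext fun k => ?_)
    fin_cases k
    exacts [h.1, h.2.1, h.2.2]
  · generalize ∑ k, c k • w k = y at *
    simp only [Fin.sum_univ_five, distMatrix, Matrix.of_apply, Matrix.cons_val, h₀₁, h₀₂, h₀₃, h₀₄,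
      h₁₂, h₁₃, h₁₄, h₂₃, h₂₄, h₃₄, SimpleGraph.dist_self, G.dist_comm (u := v₁) (v := v₀),
      G.dist_comm (u := v₂) (v := v₀), G.dist_comm (u := v₃) (v := v₀),
      G.dist_comm (u := v₄) (v := v₀), G.dist_comm (u := v₂) (v := v₁),
      G.dist_comm (u := v₃) (v := v₁), G.dist_comm (u := v₄) (v := v₁),
      G.dist_comm (u := v₃) (v := v₂), G.dist_comm (u := v₄) (v := v₂),
      G.dist_comm (u := v₄) (v := v₃)] at hle
    push_cast at hle
    linarith

theorem false_of_sq_add_sq_add_sq_le {p q r : ℝ} (s t : ℝ) (hne : p ≠ 0 ∨ q ≠ 0 ∨ r ≠ 0)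
    (h : p ^ 2 + q ^ 2 + (r + s * p + t * q) ^ 2 ≤ 0) : False := by
  have hp : p = 0 := by nlinarith [sq_nonneg p, sq_nonneg q, sq_nonneg (r + s * p + t * q)]
  have hq : q = 0 := by nlinarith [sq_nonneg p, sq_nonneg q, sq_nonneg (r + s * p + t * q)]
  subst hp hq
  have hr : r = 0 := by nlinarith
  simp_all

/-- Every two nonadjacent vertices are at distance two when the least distance eigenvalue is at
least `-3`: otherwise four consecutive vertices of a geodesic carry a vector violating the bound. -/
theorem dist_eq_two_of_compl_adj {V : Type*} [Fintype V] [DecidableEq V] {G : SimpleGraph V}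
    (hG : G.Connected) (hsmall : -3 ≤ (sortedDistEigs G).getD (Fintype.card V - 1) 0)
    {u v : V} (huv : Gᶜ.Adj u v) : G.dist u v = 2 := by
  have hlt := hG.one_lt_dist_of_ne_of_not_adj huv.ne ((SimpleGraph.compl_adj G u v).mp huv).2
  by_contra hne
  obtain ⟨p, hp⟩ := hG.exists_walk_length_eq_dist u v
  have hle : ∀ i j, G.dist (p.getVert i) (p.getVert (i + j)) ≤ j := by
    intro i j
    induction j with
    | zero => simp
    | succ j ih =>
      refine hG.dist_triangle.trans (Nat.add_le_add ih ?_)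
      by_cases hj : i + j < p.length
      · exact (SimpleGraph.dist_eq_one_iff_adj.mpr (p.adj_getVert_succ hj)).le
      · rw [p.getVert_of_length_le (not_lt.mp hj), p.getVert_of_length_le (by lia)]
        simp
  have hgeo : ∀ i j, i + j ≤ p.length → G.dist (p.getVert i) (p.getVert (i + j)) = j := by
    intro i j hij
    refine le_antisymm (hle i j) ?_
    have h₁ := hle 0 i
    have h₂ := hle (i + j) (p.length - (i + j))
    have h₃ : G.dist u v ≤ G.dist u (p.getVert i) + G.dist (p.getVert i) v := hG.dist_triangle
    have h₄ : G.dist (p.getVert i) v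
      ≤ G.dist (p.getVert i) (p.getVert (i + j)) + G.dist (p.getVert (i + j)) v := hG.dist_triangle
    rw [zero_add, p.getVert_zero] at h₁
    rw [Nat.add_sub_cancel' hij, p.getVert_length] at h₂
    lia
  let f : Fin 4 → V := fun i => p.getVert i
  have hf : f.Injective := fun i j hij =>
    Fin.ext (p.isPath_of_length_eq_dist hp |>.getVert_injOn (by simp; lia) (by simp; lia) hij)
  have hD : ∀ i j : Fin 4, G.dist (f i) (f j) = (j.val - i.val) + (i.val - j.val) := by
    intro i j
    rcases le_total i.val j.val with h | h
    · have h' := hgeo i (j - i) (by lia)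
      rw [Nat.add_sub_cancel' h] at h'
      lia
    · have h' := hgeo j (i - j) (by lia)
      rw [Nat.add_sub_cancel' h, SimpleGraph.dist_comm] at h'
      lia
  have : Nonempty V := ⟨u⟩
  have hform := neg_three_mul_le_of_smallest G hsmall (spread f ![2, 1, -1, -2])
  rw [spread_dotProduct_mulVec, spread_dotProduct_spread hf] at hform
  simp [distMatrix, hD, Fin.sum_univ_four] at hform
  norm_num at hform

/-- Under the eigenvalue conditions `G` has no induced path on four vertices. -/
theorem not_induced_path_four {V : Type*} [Fintype V] [DecidableEq V] {G : SimpleGraph V}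
    (hn : 3 ≤ Fintype.card V) (h3 : (sortedDistEigs G).getD 2 0 ≤ -1)
    (hdiam : ∀ u v, Gᶜ.Adj u v → G.dist u v = 2)
    {a b c d : V} (hbd : G.Adj b d) (had : G.Adj a d) (hac : G.Adj a c)
    (hab : Gᶜ.Adj a b) (hbc : Gᶜ.Adj b c) (hcd : Gᶜ.Adj c d) : False := by
  have hone : ∀ u v, G.Adj u v → G.dist u v = 1 := fun _ _ => SimpleGraph.dist_eq_one_iff_adj.mpr
  obtain ⟨p, hp⟩ := SimpleGraph.exists_walk_of_dist_ne_zero (by rw [hdiam b c hbc]; simp)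
  rw [hdiam b c hbc] at hp
  obtain ⟨e, hbe, hec⟩ : ∃ e, G.Adj b e ∧ G.Adj e c := by
    refine ⟨p.getVert 1, ?_, ?_⟩
    · simpa using p.adj_getVert_succ (i := 0) (by lia)
    · have h := p.adj_getVert_succ (i := 1) (by lia)
      rwa [p.getVert_of_length_le (i := 1 + 1) hp.le] at h
  have hea : e ≠ a := fun h => ((SimpleGraph.compl_adj G a b).mp hab).2 (h ▸ hbe.symm)
  have hed : e ≠ d := fun h => ((SimpleGraph.compl_adj G c d).mp hcd).2 (h ▸ hec.symm)
  have hcompl : ∀ {u v}, u ≠ v → ¬ G.Adj u v → G.dist u v = 2 := fun hne h =>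
    hdiam _ _ ((SimpleGraph.compl_adj G _ _).mpr ⟨hne, h⟩)
  have key := fun {m₀₄ m₃₄ : ℕ} (h₀₄ : G.dist a e = m₀₄ + 1) (h₃₄ : G.dist d e = m₃₄ + 1) =>
    exists_nonpos_form_of_five hn h3 (hdiam _ _ hab) (hone _ _ hac) (hone _ _ had) h₀₄
      (hdiam _ _ hbc) (hone _ _ hbd) (hone _ _ hbe) (hdiam _ _ hcd) (hone _ _ hec.symm) h₃₄
  by_cases hae : G.Adj a e <;> by_cases hde : G.Adj d e
  · obtain ⟨p, q, r, hne, y, hy, hle⟩ := key (hone _ _ hae) (hone _ _ hde)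
      ![![1, 1, 0, 0, 0], ![0, 0, 1, 1, 0], ![0, 0, 0, 0, 1]]
    simp [hy] at hle
    exact false_of_sq_add_sq_add_sq_le 2 2 hne (by nlinarith [sq_nonneg (p + q)])
  · obtain ⟨p, q, r, hne, y, hy, hle⟩ := key (hone _ _ hae) (hcompl hed.symm hde)
      ![![1, 1, 0, 0, 0], ![0, 0, 0, 1, 1], ![1, 0, -1, 0, 1]]
    simp [hy] at hle
    exact false_of_sq_add_sq_add_sq_le 2 2 hne (by nlinarith [sq_nonneg (p + q)])
  · obtain ⟨p, q, r, hne, y, hy, hle⟩ := key (hcompl hea.symm hae) (hone _ _ hde)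
      ![![1, 0, 0, 0, 1], ![0, 0, 1, 1, 0], ![0, -1, 0, 1, 1]]
    simp [hy] at hle
    exact false_of_sq_add_sq_add_sq_le 2 2 hne (by nlinarith [sq_nonneg (p + q)])
  · obtain ⟨p, q, r, hne, y, hy, hle⟩ := key (hcompl hea.symm hae) (hcompl hed.symm hde)
      ![![4, 1, -3, -3, 1], ![0, 2, 1, -1, -2], ![1, 1, 1, 1, 1]]
    simp [hy] at hle
    exact false_of_sq_add_sq_add_sq_le 0 0 hne (by nlinarith [sq_nonneg (p + q)])

/-- The disjoint union of a paw and an isolated vertex is not induced in the complement: `a b c` is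
its triangle, `d` hangs at `c`, and `e` is isolated. -/
theorem not_compl_induced_paw_add_vertex {V : Type*} [Fintype V] [DecidableEq V]
    {G : SimpleGraph V} (hn : 3 ≤ Fintype.card V) (h3 : (sortedDistEigs G).getD 2 0 ≤ -1)
    (hdiam : ∀ u v, Gᶜ.Adj u v → G.dist u v = 2) {a b c d e : V}
    (hab : Gᶜ.Adj a b) (hac : Gᶜ.Adj a c) (hbc : Gᶜ.Adj b c) (hcd : Gᶜ.Adj c d)
    (had : G.Adj a d) (hbd : G.Adj b d)
    (hae : G.Adj a e) (hbe : G.Adj b e) (hce : G.Adj c e) (hde : G.Adj d e) : False := by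
  have hone : ∀ u v, G.Adj u v → G.dist u v = 1 := fun _ _ => SimpleGraph.dist_eq_one_iff_adj.mpr
  obtain ⟨p, q, r, hne, y, hy, hle⟩ := exists_nonpos_form_of_five hn h3
    (hdiam _ _ hab) (hdiam _ _ hac) (hone _ _ had) (hone _ _ hae) (hdiam _ _ hbc)
    (hone _ _ hbd) (hone _ _ hbe) (hdiam _ _ hcd) (hone _ _ hce) (hone _ _ hde)
    ![![2, 2, 0, 0, 0], ![0, 0, 2, 4, 0], ![0, 0, 0, 0, 1]]
  simp [hy] at hle
  exact false_of_sq_add_sq_add_sq_le 4 6 hne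
    (by nlinarith [sq_nonneg (7 * p + 8 * q), sq_nonneg q])

/-- Two disjoint edges `a b`, `c d` and an isolated vertex `e` are not induced in the
complement. -/
theorem not_compl_induced_two_edges_add_vertex {V : Type*} [Fintype V] [DecidableEq V]
    {G : SimpleGraph V} (hn : 3 ≤ Fintype.card V) (h3 : (sortedDistEigs G).getD 2 0 ≤ -1)
    (hdiam : ∀ u v, Gᶜ.Adj u v → G.dist u v = 2) {a b c d e : V}
    (hab : Gᶜ.Adj a b) (hcd : Gᶜ.Adj c d)
    (hac : G.Adj a c) (had : G.Adj a d) (hbc : G.Adj b c) (hbd : G.Adj b d)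
    (hae : G.Adj a e) (hbe : G.Adj b e) (hce : G.Adj c e) (hde : G.Adj d e) : False := by
  have hone : ∀ u v, G.Adj u v → G.dist u v = 1 := fun _ _ => SimpleGraph.dist_eq_one_iff_adj.mpr
  obtain ⟨p, q, r, hne, y, hy, hle⟩ := exists_nonpos_form_of_five hn h3
    (hdiam _ _ hab) (hone _ _ hac) (hone _ _ had) (hone _ _ hae) (hone _ _ hbc)
    (hone _ _ hbd) (hone _ _ hbe) (hdiam _ _ hcd) (hone _ _ hce) (hone _ _ hde)
    ![![1, 1, 0, 0, 0], ![0, 0, 1, 1, 0], ![0, 0, 0, 0, 1]]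
  simp [hy] at hle
  exact false_of_sq_add_sq_add_sq_le 2 2 hne (by nlinarith [sq_nonneg p, sq_nonneg q])

/-- In a graph without induced `P₄`, let `A` and `B` be nonempty with no edges between them and
`A ∪ B` as large as possible. Then a vertex outside `A ∪ B` is adjacent to all of `A`. -/
theorem adj_of_maximal_separated {V : Type*} [DecidableEq V] {G : SimpleGraph V}
    (hP4 : ∀ a b c d, G.Adj b d → G.Adj a d → G.Adj a c →
      Gᶜ.Adj a b → Gᶜ.Adj b c → Gᶜ.Adj c d → False)
    {A B : Finset V} (hB : B.Nonempty) (hAB : ∀ a ∈ A, ∀ b ∈ B, Gᶜ.Adj a b)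
    (hmax : ∀ A' B' : Finset V, A'.Nonempty → B'.Nonempty →
      (∀ a ∈ A', ∀ b ∈ B', Gᶜ.Adj a b) → (A' ∪ B').card ≤ (A ∪ B).card)
    {v : V} (hv : v ∉ A ∪ B) {y : V} (hy : y ∈ A) : G.Adj v y := by
  classical
  by_contra hvy
  have hlarger : ∀ A' B' : Finset V, A'.Nonempty → B'.Nonempty →
      (∀ a ∈ A', ∀ b ∈ B', Gᶜ.Adj a b) → insert v (A ∪ B) ⊆ A' ∪ B' → False := by
    intro A' B' hA' hB' hsep hsub
    have h₁ := Finset.card_le_card hsub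
    rw [Finset.card_insert_of_notMem hv] at h₁
    have h₂ := hmax A' B' hA' hB' hsep
    lia
  have hvA : ∀ {x}, x ∈ A → v ≠ x := fun hx h => hv (Finset.mem_union_left _ (h ▸ hx))
  have hvB : ∀ {x}, x ∈ B → v ≠ x := fun hx h => hv (Finset.mem_union_right _ (h ▸ hx))
  obtain ⟨z, hz, hvz⟩ : ∃ z ∈ B, G.Adj v z := by
    by_contra! h
    refine hlarger (insert v A) B ⟨v, by simp⟩ hB ?_ (by rw [Finset.insert_union])
    intro a ha b hb
    rcases Finset.mem_insert.mp ha with rfl | ha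
    · exact (SimpleGraph.compl_adj G _ _).mpr ⟨hvB hb, h b hb⟩
    · exact hAB a ha b hb
  refine hlarger (A.filter fun x => ¬ G.Adj v x) (insert v ((A.filter (G.Adj v)) ∪ B))
    ⟨y, by simp [hy, hvy]⟩ ⟨v, by simp⟩ ?_ ?_
  · intro a ha b hb
    obtain ⟨haA, hva⟩ := Finset.mem_filter.mp ha
    have hav : Gᶜ.Adj a v := (SimpleGraph.compl_adj G _ _).mpr
      ⟨(hvA haA).symm, fun h => hva h.symm⟩
    rw [Finset.mem_insert, Finset.mem_union, Finset.mem_filter] at hb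
    rcases hb with rfl | ⟨hbA, hvb⟩ | hb
    · exact hav
    · refine (SimpleGraph.compl_adj G _ _).mpr ⟨fun h => hva (h ▸ hvb), fun hab => ?_⟩
      exact hP4 v a z b hab hvb hvz hav.symm (hAB a haA z hz) (hAB b hbA z hz).symm
    · exact hAB a haA b hb
  · intro x
    simp only [Finset.mem_insert, Finset.mem_union, Finset.mem_filter]
    tauto

/-- A connected noncomplete graph without induced `P₄` is a join, one of whose factors is a
disjoint union of two nonempty graphs. -/
theorem exists_join_of_not_induced_path_four {V : Type*} [Fintype V] [DecidableEq V]
    {G : SimpleGraph V} (hG : G.Connected) (hnc : G ≠ ⊤)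
    (hP4 : ∀ a b c d, G.Adj b d → G.Adj a d → G.Adj a c →
      Gᶜ.Adj a b → Gᶜ.Adj b c → Gᶜ.Adj c d → False) :
    ∃ A B : Finset V, A.Nonempty ∧ B.Nonempty ∧ (∀ a ∈ A, ∀ b ∈ B, Gᶜ.Adj a b) ∧
      (∃ v, v ∉ A ∪ B) ∧ ∀ u ∈ A ∪ B, ∀ v ∉ A ∪ B, G.Adj u v := by
  classical
  obtain ⟨u, v, huv⟩ : ∃ u v, Gᶜ.Adj u v := by
    by_contra! h
    refine hnc (SimpleGraph.ext (funext₂ fun a b => propext ⟨fun hab => hab.ne, fun hab => ?_⟩))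
    by_contra hadj
    exact h a b ((SimpleGraph.compl_adj G _ _).mpr ⟨hab, hadj⟩)
  let S : Finset (Finset V × Finset V) := Finset.univ.filter fun p =>
    p.1.Nonempty ∧ p.2.Nonempty ∧ ∀ a ∈ p.1, ∀ b ∈ p.2, Gᶜ.Adj a b
  obtain ⟨⟨A, B⟩, hmem, hmax⟩ := S.exists_max_image (fun p => (p.1 ∪ p.2).card)
    ⟨({u}, {v}), by simpa [S] using huv⟩
  obtain ⟨-, hA, hB, hAB⟩ := Finset.mem_filter.mp hmem
  have hmax' : ∀ A' B' : Finset V, A'.Nonempty → B'.Nonempty →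
      (∀ a ∈ A', ∀ b ∈ B', Gᶜ.Adj a b) → (A' ∪ B').card ≤ (A ∪ B).card :=
    fun A' B' hA' hB' h => hmax (A', B') (Finset.mem_filter.mpr ⟨Finset.mem_univ _, hA', hB', h⟩)
  refine ⟨A, B, hA, hB, hAB, ?_, fun x hx w hw => ?_⟩
  · by_contra! hall
    obtain ⟨a, ha⟩ := hA
    obtain ⟨b, hb⟩ := hB
    obtain ⟨p⟩ := hG.preconnected a b
    obtain ⟨d, -, hd₁, hd₂⟩ := p.exists_boundary_dart (A : Set V) ha
      (fun h => (hAB b h b hb).ne rfl)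
    have hd₃ : d.snd ∈ B := (Finset.mem_union.mp (hall d.snd)).resolve_left hd₂
    exact ((SimpleGraph.compl_adj G _ _).mp (hAB _ hd₁ _ hd₃)).2 d.adj
  · rcases Finset.mem_union.mp hx with hx | hx
    · exact (adj_of_maximal_separated hP4 hB hAB hmax' hw hx).symm
    · rw [Finset.union_comm] at hw
      refine (adj_of_maximal_separated hP4 hA (fun b hb a ha => (hAB a ha b hb).symm) ?_ hw hx).symm
      rwa [Finset.union_comm B A]

theorem exists_path_of_hasInducedIso {V : Type*} {G : SimpleGraph V} {s : Set V}
    (h : hasInducedIso (G.induce s) (SimpleGraph.pathGraph 3)) :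
    ∃ x ∈ s, ∃ y ∈ s, ∃ z ∈ s, G.Adj x y ∧ G.Adj y z ∧ Gᶜ.Adj x z := by
  obtain ⟨t, ⟨φ⟩⟩ := h
  have hadj : ∀ i j, G.Adj (φ.symm i).1.1 (φ.symm j).1.1 ↔ (SimpleGraph.pathGraph 3).Adj i j :=
    fun i j => φ.symm.map_adj_iff
  refine ⟨_, (φ.symm 0).1.2, _, (φ.symm 1).1.2, _, (φ.symm 2).1.2, ?_, ?_, ?_⟩
  · rw [hadj, SimpleGraph.pathGraph_adj]
    simp
  · rw [hadj, SimpleGraph.pathGraph_adj]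
    simp
  · rw [SimpleGraph.compl_adj, hadj, SimpleGraph.pathGraph_adj]
    refine ⟨fun h => ?_, by simp⟩
    exact absurd (φ.symm.injective (Subtype.ext (Subtype.ext h))) (by decide)

/- **Statement 12.** Let `G` be a non-complete finite connected simple graph on `n ≥ 4`
vertices with `∂_3(G) ≤ −1` and `∂_n(G) ≥ −3`.  Then `G = G_1 ∨ G_2` is a join of two proper
nonempty induced subgraphs (given by a set `s` and its complement, with all cross edges
present), at most one of which contains an induced `P_3`; moreover if one of the two parts
contains an induced `P_3` then that part is connected and the other part is complete. -/
theorem join_decomposition_of_distance_eigenvalue_conditions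
    {V : Type*} [Fintype V] [DecidableEq V] (G : SimpleGraph V)
    (hG : G.Connected) (hnc : G ≠ ⊤) (hn : 4 ≤ Fintype.card V)
    (h3 : (sortedDistEigs G).getD 2 0 ≤ -1)
    (hsmall : -3 ≤ (sortedDistEigs G).getD (Fintype.card V - 1) 0) :
    ∃ s : Set V, s.Nonempty ∧ sᶜ.Nonempty ∧ (∀ u ∈ s, ∀ v ∈ sᶜ, G.Adj u v) ∧
      ¬ (hasInducedIso (G.induce s) (SimpleGraph.pathGraph 3) ∧
          hasInducedIso (G.induce sᶜ) (SimpleGraph.pathGraph 3)) ∧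
      (hasInducedIso (G.induce s) (SimpleGraph.pathGraph 3) →
        (G.induce s).Connected ∧ G.IsClique sᶜ) ∧
      (hasInducedIso (G.induce sᶜ) (SimpleGraph.pathGraph 3) →
        (G.induce sᶜ).Connected ∧ G.IsClique s) := by
  have hn' : 3 ≤ Fintype.card V := by lia
  have hdiam : ∀ u v, Gᶜ.Adj u v → G.dist u v = 2 := fun _ _ => dist_eq_two_of_compl_adj hG hsmall
  obtain ⟨A, B, ⟨a, ha⟩, ⟨b, hb⟩, hAB, ⟨r, hr⟩, hjoin⟩ :=
    exists_join_of_not_induced_path_four hG hnc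
      fun _ _ _ _ => not_induced_path_four hn' h3 hdiam
  have hfree : ¬ hasInducedIso (G.induce (A ∪ B : Finset V)) (SimpleGraph.pathGraph 3) := by
    intro h
    obtain ⟨x, hx, y, hy, z, hz, hxy, hyz, hxz⟩ := exists_path_of_hasInducedIso h
    obtain ⟨d, hd, hxd, hyd, hzd⟩ : ∃ d ∈ A ∪ B, Gᶜ.Adj x d ∧ Gᶜ.Adj y d ∧ Gᶜ.Adj z d := by
      have hnot : ∀ {u v}, u ∈ A → v ∈ B → ¬ G.Adj u v := fun hu hv =>
        ((SimpleGraph.compl_adj G _ _).mp (hAB _ hu _ hv)).2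
      simp only [Finset.coe_union, Set.mem_union, Finset.mem_coe] at hx hy hz
      rcases hy with hy | hy
      · have hx' := hx.resolve_right fun h => hnot hy h hxy.symm
        have hz' := hz.resolve_right fun h => hnot hy h hyz
        exact ⟨b, Finset.mem_union_right _ hb, hAB x hx' b hb, hAB y hy b hb, hAB z hz' b hb⟩
      · have hx' := hx.resolve_left fun h => hnot h hy hxy
        have hz' := hz.resolve_left fun h => hnot h hy hyz.symm
        exact ⟨a, Finset.mem_union_left _ ha, (hAB a ha x hx').symm, (hAB a ha y hy).symm,
          (hAB a ha z hz').symm⟩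
    exact not_compl_induced_paw_add_vertex hn' h3 hdiam hxz hxd hzd hyd.symm hxy hyz.symm
      (hjoin x hx r hr) (hjoin z hz r hr) (hjoin d hd r hr) (hjoin y hy r hr)
  have hfree' : ¬ hasInducedIso (G.induce ((A ∪ B : Finset V) : Set V)ᶜ)
      (SimpleGraph.pathGraph 3) := by
    intro h
    obtain ⟨x, hx, y, hy, z, hz, hxy, hyz, hxz⟩ := exists_path_of_hasInducedIso h
    have ha' := hjoin a (Finset.mem_union_left _ ha)
    have hb' := hjoin b (Finset.mem_union_right _ hb)
    exact not_compl_induced_two_edges_add_vertex hn' h3 hdiam (hAB a ha b hb) hxz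
      (ha' x hx) (ha' z hz) (hb' x hx) (hb' z hz) (ha' y hy) (hb' y hy) hxy hyz.symm
  exact ⟨(A ∪ B : Finset V), ⟨a, Finset.mem_union_left _ ha⟩, ⟨r, hr⟩, hjoin,
    fun h => hfree h.1, fun h => absurd h hfree, fun h => absurd h hfree'⟩
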